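/- arXiv:2403.19064 — 2 statements merged into one kernel-verified Lean document; each statement's English description precedes it below -/
import Mathlib

section
/- With a covering and choices of transition matrices A_{ij} normalized so that det A_{ij} = (−1)^{t_i} h_{ij}/s_{j t_i}, let M_i be the r×(r−2) matrix whose block form is (Δ_{t_i}T'_i over T''_i), where T'_i is the (r−1)×(r−1) matrix equal to the identity except that its t_i-th column has entries −(−1)^{t_i} s_{i1}, …, −(−1)^{t_i} s_{i,r−1} (with 1 in position t_i), T''_i is the 2×(r−1) matrix which is zero except that its t_i-th column is (f_i, g_i)^T, and Δ_t deletes the t-th row. Then an r×r matrix Z_{ij} with block form ((P_{ij}, Q_{ij}),(R_{ij}, S_{ij})) satisfies M_i = Z_{ij} M_j if and only if: (1) P_{ij} = Δ_{t_i}T'_i Δ'_{t_j}; (2) R_{ij} = T''_i Δ'_{t_j}; (3) Q_{ij}(f_j, g_j)^T = (−1)^{t_j} Δ_{t_i}T'_i (s_{j1}, …, s_{j,r−1})^T; and (4) S_{ij}(f_j, g_j)^T = (−1)^{t_j} s_{j t_i} (f_i, g_i)^T. Moreover, such a matrix Z_{ij} always exists, and with the above normalization one has det S_{ij} = (−1)^{t_i}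 s_{j t_i} h_{ij} and det Z_{ij} = h_{ij}. -/
/-! **Lemma 4.1 of Arrondo's "Home-made Hartshorne–Serre correspondence".**

Throughout, write the rank as `r = n + 2`, so that the `r − 1` sections are indexed by
`Fin (n + 1)` and the matrices `Mᵢ` have `r = n + 2` rows (indexed by `Fin n ⊕ Fin 2`)
and `r − 1 = n + 1` columns. All computations happen in the (commutative) ring `A` of
regular functions on `U i ∩ U j`, where `Y` is a codimension-two local complete
intersection subscheme of the smooth variety `X`, its ideal on `U i` is generated by the
regular functions `fi, gi` (resp. `fj, gj` on `U j`), `L` is a line bundle with transition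
function `h` (a unit), and `si, sj` are the local representatives of the `r − 1` global
sections generating `(∧²N) ⊗ L*|_Y`, normalized so that `si ti = (−1)^{ti}` and
`sj tj = (−1)^{tj}`, with the transition matrix `Amat` for `(fi, gi)` chosen with
`det Amat = (−1)^{ti} · h / (sj ti)`. -/

open Matrix

/-- The `(r−1)×(r−1)` matrix `T'ᵢ`: the identity matrix except that its `t`-th column has
entries `−(−1)^t s 0, …, −(−1)^t s (r−2)`, with `1` in position `t`. -/
def Tmat {A : Type*} [CommRing A] {n : ℕ} (t : Fin (n + 1)) (s : Fin (n + 1) → A) :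
    Matrix (Fin (n + 1)) (Fin (n + 1)) A :=
  Matrix.of fun a b =>
    if b = t then (if a = t then 1 else -(-1 : A) ^ (t : ℕ) * s a)
    else if a = b then 1 else 0

/-- The `2×(r−1)` matrix `T''ᵢ`: zero except that its `t`-th column is `(f, g)ᵀ`. -/
def Tmat'' {A : Type*} [CommRing A] {n : ℕ} (t : Fin (n + 1)) (f g : A) :
    Matrix (Fin 2) (Fin (n + 1)) A :=
  Matrix.of fun a b => if b = t then ![f, g] a else 0

/-- `Δ_t`: delete the `t`-th row of a matrix with `r − 1 = n + 1` rows. -/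
def deleteRow {A : Type*} {n : ℕ} {m : Type*} (t : Fin (n + 1))
    (M : Matrix (Fin (n + 1)) m A) : Matrix (Fin n) m A :=
  M.submatrix t.succAbove id

/-- `Δ'_t`: delete the `t`-th column of a matrix with `r − 1 = n + 1` columns. -/
def deleteCol {A : Type*} {n : ℕ} {m : Type*} (t : Fin (n + 1))
    (M : Matrix m (Fin (n + 1)) A) : Matrix m (Fin n) A :=
  M.submatrix id t.succAbove

/-- The `r×(r−1)` matrix `Mᵢ` with block form `(Δ_{tᵢ}T'ᵢ over T''ᵢ)`, whose columns
represent the sections `α₁, …, α_{r−1}` on `U i`. -/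
def Mmat {A : Type*} [CommRing A] {n : ℕ} (t : Fin (n + 1)) (s : Fin (n + 1) → A)
    (f g : A) : Matrix (Fin n ⊕ Fin 2) (Fin (n + 1)) A :=
  Matrix.fromRows (deleteRow t (Tmat t s)) (Tmat'' t f g)

theorem aux_sq {A : Type*} [CommRing A] (k : ℕ) : (-1 : A) ^ k * (-1 : A) ^ k = 1 := by
  rw [← mul_pow]; simp

theorem aux_top {A : Type*} [CommRing A] {n : ℕ} {m : Type*}
    (t : Fin (n + 1)) (s : Fin (n + 1) → A) (f g : A)
    (hn : s t = (-1 : A) ^ (t : ℕ))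
    (G : Matrix m (Fin (n + 1)) A) (P : Matrix m (Fin n) A) (Q : Matrix m (Fin 2) A) :
    G = P * deleteRow t (Tmat t s) + Q * Tmat'' t f g ↔
      P = deleteCol t G ∧ Q.mulVec ![f, g] = ((-1 : A) ^ (t : ℕ)) • G.mulVec s := by
  have e := aux_sq (A := A) (t : ℕ)
  have h1 : ∀ a b, (P * deleteRow t (Tmat t s) + Q * Tmat'' t f g) a (t.succAbove b) = P a b := by
    intro a b
    simp [Matrix.add_apply, Matrix.mul_apply, deleteRow, Tmat, Tmat'', Fin.succAbove_ne]
  have h2 : ∀ a, (P * deleteRow t (Tmat t s) + Q * Tmat'' t f g) a t =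
      -(-1 : A) ^ (t : ℕ) * (∑ b, P a b * s (t.succAbove b)) + Q.mulVec ![f, g] a := by
    intro a
    simp only [Matrix.add_apply, Matrix.mul_apply, deleteRow, Tmat, Tmat'', Matrix.mulVec,
      dotProduct, Matrix.submatrix_apply, Matrix.of_apply, if_true, Fin.succAbove_ne, if_false,
      Finset.mul_sum, id]
    congr 1
    exact Finset.sum_congr rfl fun b _ => by ring
  have h3 : ∀ a, G.mulVec s a = G a t * (-1 : A) ^ (t : ℕ) +
      ∑ b, G a (t.succAbove b) * s (t.succAbove b) := by
    intro a
    simp only [Matrix.mulVec, dotProduct]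
    rw [Fin.sum_univ_succAbove _ t, hn]
  constructor
  · intro hG
    have hP : P = deleteCol t G := by
      ext a b
      rw [← h1 a b, ← hG]; rfl
    refine ⟨hP, ?_⟩
    funext a
    have := h2 a
    rw [← hG] at this
    rw [Pi.smul_apply, h3, smul_eq_mul]
    have hs : ∑ b, P a b * s (t.succAbove b) = ∑ b, G a (t.succAbove b) * s (t.succAbove b) := by
      rw [hP]; rfl
    rw [hs] at this
    linear_combination (-1 : A) * this - G a t * e
  · rintro ⟨hP, hQ⟩
    ext a b
    rcases Fin.eq_self_or_eq_succAbove t b with rfl | ⟨b, rfl⟩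
    · rw [h2, hQ, Pi.smul_apply, h3, smul_eq_mul]
      have hs : ∑ c, P a c * s (b.succAbove c) =
          ∑ c, G a (b.succAbove c) * s (b.succAbove c) := by
        rw [hP]; rfl
      rw [hs]
      linear_combination - G a b * e
    · rw [h1, hP]; rfl

theorem aux_Tmul {A : Type*} [CommRing A] {n : ℕ} (t : Fin (n + 1)) (s : Fin (n + 1) → A) :
    Tmat t s * Tmat t (-s) = 1 := by
  ext a b
  rw [Matrix.mul_apply, Fin.sum_univ_succAbove _ t]
  by_cases hb : b = t
  · subst hb
    rcases Fin.eq_self_or_eq_succAbove b a with rfl | ⟨a, rfl⟩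
    · simp [Tmat, Fin.succAbove_ne, (Fin.succAbove_ne _ _).symm]
    · simp [Tmat, Fin.succAbove_ne, (Fin.succAbove_ne _ _).symm, Matrix.one_apply]
  · obtain ⟨b, rfl⟩ := (Fin.eq_self_or_eq_succAbove t b).resolve_left hb
    simp [Tmat, Fin.succAbove_ne, (Fin.succAbove_ne _ _).symm, Matrix.one_apply]

theorem aux_Tdet {A : Type*} [CommRing A] {n : ℕ} (t : Fin (n + 1)) (s : Fin (n + 1) → A) :
    (Tmat t s).det = 1 := by
  have : Tmat t s = (1 : Matrix _ _ A).updateCol t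
      (fun a => if a = t then 1 else -(-1 : A) ^ (t : ℕ) * s a) := by
    ext a b
    simp [Tmat, Matrix.updateCol_apply, Matrix.one_apply]
  rw [this, ← Matrix.cramer_apply, Matrix.cramer_one]
  simp

theorem aux_minor {A : Type*} [CommRing A] {n : ℕ} (t u : Fin (n + 1)) (s : Fin (n + 1) → A) :
    (deleteCol u (deleteRow t (Tmat t s))).det =
      (-1 : A) ^ ((t : ℕ) + (u : ℕ)) * (Tmat t (-s) u t) := by
  have hadj : (Tmat t s).adjugate = Tmat t (-s) := by
    have h := Matrix.adjugate_mul (Tmat t s)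
    rw [aux_Tdet, one_smul] at h
    calc (Tmat t s).adjugate = (Tmat t s).adjugate * (Tmat t s * Tmat t (-s)) := by
          rw [aux_Tmul, Matrix.mul_one]
      _ = Tmat t (-s) := by rw [← Matrix.mul_assoc, h, Matrix.one_mul]
  rw [← hadj, Matrix.adjugate_fin_succ_eq_det_submatrix, ← mul_assoc, aux_sq, one_mul]
  rfl

/-- An `r×r` matrix `Z = ((P, Q), (R, S))` satisfies `Mᵢ = Z Mⱼ` if and only if
(1) `P = Δ_{tᵢ}T'ᵢ Δ'_{tⱼ}`; (2) `R = T''ᵢ Δ'_{tⱼ}`;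
(3) `Q (fⱼ, gⱼ)ᵀ = (−1)^{tⱼ} Δ_{tᵢ}T'ᵢ (sⱼ₁, …, sⱼ,r−1)ᵀ`;
(4) `S (fⱼ, gⱼ)ᵀ = (−1)^{tⱼ} sⱼ,tᵢ (fᵢ, gᵢ)ᵀ`.
Moreover such a matrix always exists and, with the normalized choice of `Amat`,
it satisfies `det S = (−1)^{tᵢ} sⱼ,tᵢ h` and `det Z = h`. -/
theorem stmt17 {A : Type*} [CommRing A] {n : ℕ}
    (fi gi fj gj : A) (si sj : Fin (n + 1) → A) (ti tj : Fin (n + 1)) (h : A)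
    (hUnit : IsUnit h)
    (hnormi : si ti = (-1 : A) ^ (ti : ℕ)) (hnormj : sj tj = (-1 : A) ^ (tj : ℕ))
    -- (fj, gj) is a regular sequence cutting out Y (Koszul relations only):
    (hreg : ∀ a b : A, a * fj + b * gj = 0 → ∃ c : A, a = c * gj ∧ b = -(c * fj))
    (Amat : Matrix (Fin 2) (Fin 2) A)
    (hA : ![fi, gi] = Amat.mulVec ![fj, gj])
    (hAdet : Amat.det * sj ti = (-1 : A) ^ (ti : ℕ) * h)
    -- the sections transform by s̄ᵢ = (det Ā/h̄) s̄ⱼ on Y ∩ Uᵢ ∩ Uⱼ: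
    (hs : ∀ u : Fin (n + 1), h * si u - Amat.det * sj u ∈ Ideal.span ({fj, gj} : Set A)) :
    (∀ (P : Matrix (Fin n) (Fin n) A) (Q : Matrix (Fin n) (Fin 2) A)
        (R : Matrix (Fin 2) (Fin n) A) (S : Matrix (Fin 2) (Fin 2) A),
      Mmat ti si fi gi = Matrix.fromBlocks P Q R S * Mmat tj sj fj gj ↔
        (P = deleteCol tj (deleteRow ti (Tmat ti si)) ∧
         R = deleteCol tj (Tmat'' ti fi gi) ∧
         Q.mulVec ![fj, gj] =
           ((-1 : A) ^ (tj : ℕ)) • (deleteRow ti (Tmat ti si)).mulVec sj ∧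
         S.mulVec ![fj, gj] = ((-1 : A) ^ (tj : ℕ) * sj ti) • ![fi, gi])) ∧
    (∃ (P : Matrix (Fin n) (Fin n) A) (Q : Matrix (Fin n) (Fin 2) A)
        (R : Matrix (Fin 2) (Fin n) A) (S : Matrix (Fin 2) (Fin 2) A),
      Mmat ti si fi gi = Matrix.fromBlocks P Q R S * Mmat tj sj fj gj ∧
      S.det = (-1 : A) ^ (ti : ℕ) * sj ti * h ∧
      (Matrix.fromBlocks P Q R S).det = h) := by
  have hbot : (Tmat'' ti fi gi).mulVec sj = sj ti • ![fi, gi] := by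
    funext a
    simp [Tmat'', Matrix.mulVec, dotProduct, mul_comm]
  have hiff : ∀ (P : Matrix (Fin n) (Fin n) A) (Q : Matrix (Fin n) (Fin 2) A)
        (R : Matrix (Fin 2) (Fin n) A) (S : Matrix (Fin 2) (Fin 2) A),
      Mmat ti si fi gi = Matrix.fromBlocks P Q R S * Mmat tj sj fj gj ↔
        (P = deleteCol tj (deleteRow ti (Tmat ti si)) ∧
         R = deleteCol tj (Tmat'' ti fi gi) ∧
         Q.mulVec ![fj, gj] =
           ((-1 : A) ^ (tj : ℕ)) • (deleteRow ti (Tmat ti si)).mulVec sj ∧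
         S.mulVec ![fj, gj] = ((-1 : A) ^ (tj : ℕ) * sj ti) • ![fi, gi]) := by
    intro P Q R S
    have h1 := aux_top tj sj fj gj hnormj (deleteRow ti (Tmat ti si)) P Q
    have h2 := aux_top tj sj fj gj hnormj (Tmat'' ti fi gi) R S
    rw [hbot, smul_smul] at h2
    unfold Mmat
    rw [Matrix.fromBlocks_mul_fromRows, Matrix.fromRows_ext_iff, h1, h2]
    tauto
  refine ⟨hiff, ?_⟩
  have ei := aux_sq (A := A) (ti : ℕ)
  have ej := aux_sq (A := A) (tj : ℕ)
  obtain ⟨h', hh'⟩ := hUnit.exists_right_inv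
  -- c is the inverse of sj ti
  obtain ⟨c, hc⟩ : ∃ c, sj ti * c = 1 := by
    refine ⟨Amat.det * ((-1 : A) ^ (ti : ℕ) * h'), ?_⟩
    linear_combination ((-1 : A) ^ (ti : ℕ) * h') * hAdet + h * h' * ei + hh'
  -- Q exists
  have hQ : ∀ a : Fin n, ∃ q : Fin 2 → A, q ⬝ᵥ ![fj, gj] =
      (((-1 : A) ^ (tj : ℕ)) • (deleteRow ti (Tmat ti si)).mulVec sj) a := by
    intro a
    have hm := hs (ti.succAbove a)
    obtain ⟨x, y, hxy⟩ := Ideal.mem_span_pair.1 hm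
    have hv : (deleteRow ti (Tmat ti si)).mulVec sj a =
        sj (ti.succAbove a) - (-1 : A) ^ (ti : ℕ) * si (ti.succAbove a) * sj ti := by
      simp only [Matrix.mulVec, dotProduct]
      rw [Fin.sum_univ_succAbove _ ti]
      simp [deleteRow, Tmat, Fin.succAbove_ne]
      ring
    refine ⟨(-((-1 : A) ^ (tj : ℕ) * (-1 : A) ^ (ti : ℕ) * sj ti * h')) • ![x, y], ?_⟩
    rw [Pi.smul_apply, hv]
    simp only [smul_dotProduct, smul_eq_mul]
    simp only [dotProduct, Fin.sum_univ_two, Matrix.cons_val_zero, Matrix.cons_val_one]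
    rw [hxy]
    linear_combination (-1 : A) ^ (tj : ℕ) * (-1 : A) ^ (ti : ℕ) * h' * sj (ti.succAbove a) * hAdet
      + (-1 : A) ^ (tj : ℕ) * h' * h * sj (ti.succAbove a) * ei
      + ((-1 : A) ^ (tj : ℕ) * sj (ti.succAbove a)
        - (-1 : A) ^ (tj : ℕ) * (-1 : A) ^ (ti : ℕ) * sj ti * si (ti.succAbove a)) * hh'
  choose q hq using hQ
  let P := deleteCol tj (deleteRow ti (Tmat ti si))
  let Q : Matrix (Fin n) (Fin 2) A := Matrix.of q
  let R := deleteCol tj (Tmat'' ti fi gi)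
  let S : Matrix (Fin 2) (Fin 2) A := ((-1 : A) ^ (tj : ℕ) * sj ti) • Amat
  have hQv : Q.mulVec ![fj, gj] =
      ((-1 : A) ^ (tj : ℕ)) • (deleteRow ti (Tmat ti si)).mulVec sj := by
    funext a; exact hq a
  have hSv : S.mulVec ![fj, gj] = ((-1 : A) ^ (tj : ℕ) * sj ti) • ![fi, gi] := by
    rw [hA, Matrix.smul_mulVec]
  have hSdet : S.det = (-1 : A) ^ (ti : ℕ) * sj ti * h := by
    rw [Matrix.det_smul, Fintype.card_fin]
    linear_combination ((-1 : A) ^ (tj : ℕ)) ^ 2 * sj ti * hAdet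
      + (-1 : A) ^ (ti : ℕ) * sj ti * h * ej
  refine ⟨P, Q, R, S, (hiff P Q R S).2 ⟨rfl, rfl, hQv, hSv⟩, hSdet, ?_⟩
  let X : Matrix (Fin 2) (Fin n) A :=
    Matrix.of fun a b => if tj.succAbove b = ti then (-1 : A) ^ (tj : ℕ) * c * ![fj, gj] a else 0
  have hmulX : ∀ {m : Type} (B : Matrix m (Fin 2) A) (a : m) (b : Fin n), (B * X) a b =
      if tj.succAbove b = ti then (-1 : A) ^ (tj : ℕ) * c * B.mulVec ![fj, gj] a else 0 := by
    intro m B a b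
    simp only [Matrix.mul_apply, X, Matrix.of_apply, Matrix.mulVec, dotProduct]
    split_ifs
    · rw [Finset.mul_sum]
      exact Finset.sum_congr rfl fun b _ => by ring
    · simp
  have hSX : S * X = R := by
    ext a b
    rw [hmulX, hSv]
    simp only [R, deleteCol, Tmat'', Matrix.submatrix_apply, Matrix.of_apply, id, Pi.smul_apply,
      smul_eq_mul]
    split_ifs
    · linear_combination (![fi, gi] a) * (sj ti * c * ej + hc)
    · rfl
  let s' : Fin (n + 1) → A := fun a => (-1 : A) ^ (ti : ℕ) * c * sj a
  have hPX : P - Q * X = deleteCol tj (deleteRow ti (Tmat ti s')) := by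
    ext a b
    have hv : (deleteRow ti (Tmat ti si)).mulVec sj a =
        sj (ti.succAbove a) - (-1 : A) ^ (ti : ℕ) * si (ti.succAbove a) * sj ti := by
      simp only [Matrix.mulVec, dotProduct]
      rw [Fin.sum_univ_succAbove _ ti]
      simp [deleteRow, Tmat, Fin.succAbove_ne]
      ring
    rw [Matrix.sub_apply, hmulX, hQv, Pi.smul_apply, hv]
    simp only [P, s', deleteCol, deleteRow, Tmat, Matrix.submatrix_apply, Matrix.of_apply, id,
      smul_eq_mul, Fin.succAbove_ne, if_false]
    split_ifs
    · linear_combination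
        (-c * (sj (ti.succAbove a) - (-1 : A) ^ (ti : ℕ) * si (ti.succAbove a) * sj ti)) * ej
        + c * sj (ti.succAbove a) * ei + (-1 : A) ^ (ti : ℕ) * si (ti.succAbove a) * hc
    · simp
    · simp
  have hfac : Matrix.fromBlocks P Q R S * Matrix.fromBlocks 1 0 (-X) 1 =
      Matrix.fromBlocks (P - Q * X) Q 0 S := by
    rw [Matrix.fromBlocks_multiply]
    simp [hSX, sub_eq_add_neg]
  have hd := congrArg Matrix.det hfac
  rw [Matrix.det_mul, Matrix.det_fromBlocks_zero₁₂, Matrix.det_fromBlocks_zero₂₁, hPX, aux_minor,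
    hSdet] at hd
  have hT : Tmat ti (-s') tj ti = (-1 : A) ^ (tj : ℕ) * c := by
    simp only [Tmat, Matrix.of_apply, if_true, s', Pi.neg_apply]
    split_ifs with hij
    · rw [← hnormj, hij, hc]
    · rw [hnormj]
      linear_combination c * (-1 : A) ^ (tj : ℕ) * ei
  rw [hT] at hd
  simp only [Matrix.det_one, mul_one, pow_add] at hd
  rw [hd]
  linear_combination (sj ti * c * h) * ((-1 : A) ^ (tj : ℕ) * (-1 : A) ^ (tj : ℕ) * ei + ej) + h * hc
end

section
/- If the matrices Z_{ij} are chosen as in the preceding lemma (satisfying M_i = Z_{ij} M_j with the stated block conditions and determinant normalizations), then for any indices i, j, k there exist regular functions β_{ijk,1}, …, β_{ijk,r−1} on U_i ∩ U_j ∩ U_k such that Z_{ik} − Z_{ij}Z_{jk} = (0 | B_{ijk}), where the r×2 matrix B_{ijk}, whose blocks are Q_{ik} − P_{ij}Q_{jk} − Q_{ij}S_{jk} and S_{ik} − R_{ij}Q_{jk} − S_{ij}S_{jk}, equals the product of the column vector (β_{ijk,1}, …, β̂_{ijk,t_i}, …, β_{ijk,r−1}, β_{ijk,t_i}f_i, β_{ijk,t_i}g_i)^T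 (the t_i-th entry omitted from the first r−2 positions and reinserted multiplied by f_i and g_i in the last two) with the row vector (g_k, −f_k). -/
/-! **Corollary 4.4 of Arrondo's "Home-made Hartshorne–Serre correspondence".**

Throughout, write the rank as `r = n + 2`, so that the `r − 1` sections are indexed by
`Fin (n + 1)` and the matrices `Mᵢ` have `r = n + 2` rows (indexed by `Fin n ⊕ Fin 2`)
and `r − 1 = n + 1` columns. All computations happen in the (commutative) ring `A` of
regular functions on `U i ∩ U j ∩ U k`, where `Y` is a codimension-two local complete
intersection subscheme of the smooth variety `X`, its ideal on `U i` is generated by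
`fi, gi` (similarly for `j`, `k`), `L` is a line bundle with transition functions
`hij, hjk, hik` (units, satisfying the cocycle condition), and `si, sj, sk` are the
normalized local representatives of the `r − 1` global sections generating
`(∧²N) ⊗ L*|_Y`, with distinguished indices `ti, tj, tk`. -/

open Matrix

theorem Mmat_inl_succAbove {A : Type*} [CommRing A] {n : ℕ} (t : Fin (n + 1))
    (s : Fin (n + 1) → A) (f g : A) (a c : Fin n) :
    Mmat t s f g (Sum.inl a) (t.succAbove c) = if a = c then 1 else 0 := by
  simp [Mmat, deleteRow, Tmat, Fin.succAbove_ne]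

theorem Mmat_inr {A : Type*} [CommRing A] {n : ℕ} (t : Fin (n + 1))
    (s : Fin (n + 1) → A) (f g : A) (a : Fin 2) (b : Fin (n + 1)) :
    Mmat t s f g (Sum.inr a) b = if b = t then ![f, g] a else 0 := by
  simp [Mmat, Tmat'']

/-- A matrix killed by `M_k` is a column times `(0, g, -f)`. -/
theorem exists_col {A : Type*} [CommRing A] {n : ℕ} (t : Fin (n + 1))
    (s : Fin (n + 1) → A) (f g : A)
    (hreg : ∀ a b : A, a * f + b * g = 0 → ∃ c : A, a = c * g ∧ b = -(c * f))
    (D : Matrix (Fin n ⊕ Fin 2) (Fin n ⊕ Fin 2) A) (hD : D * Mmat t s f g = 0) :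
    ∃ c : Fin n ⊕ Fin 2 → A, D = Matrix.vecMulVec c (Sum.elim 0 ![g, -f]) := by
  have h0 : ∀ x a, D x (Sum.inl a) = 0 := by
    intro x a
    have := congrFun (congrFun hD x) (t.succAbove a)
    simpa [Matrix.mul_apply, Mmat_inl_succAbove, Mmat_inr, Fin.succAbove_ne] using this
  have h1 : ∀ x, ∃ c, D x (Sum.inr 0) = c * g ∧ D x (Sum.inr 1) = -(c * f) := by
    intro x
    apply hreg
    have := congrFun (congrFun hD x) t
    simpa [Matrix.mul_apply, h0, Mmat_inr] using this
  choose c hc using h1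
  refine ⟨c, ?_⟩
  ext x y
  rcases y with y | y
  · simp [Matrix.vecMulVec_apply, h0]
  · fin_cases y
    · simpa [Matrix.vecMulVec_apply] using (hc x).1
    · simpa [Matrix.vecMulVec_apply] using (hc x).2

/-- A vector killed by `(0, g, -f)` is in the image of `M_k`. -/
theorem exists_preimage {A : Type*} [CommRing A] {n : ℕ} (t : Fin (n + 1))
    (s : Fin (n + 1) → A) (f g : A)
    (hreg : ∀ a b : A, a * f + b * g = 0 → ∃ c : A, a = c * g ∧ b = -(c * f))
    (v : Fin n ⊕ Fin 2 → A) (hv : Sum.elim 0 ![g, -f] ⬝ᵥ v = 0) :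
    ∃ ξ : Fin (n + 1) → A, v = Mmat t s f g *ᵥ ξ := by
  obtain ⟨c, h1, h2⟩ := hreg (v (Sum.inr 1)) (-v (Sum.inr 0)) (by
    simp [dotProduct] at hv
    linear_combination -hv)
  refine ⟨t.insertNth c (fun a => v (Sum.inl a) - Mmat t s f g (Sum.inl a) t * c), ?_⟩
  ext x
  rcases x with a | a
  · simp [Matrix.mulVec, dotProduct, Fin.sum_univ_succAbove _ t, Mmat_inl_succAbove]
  · fin_cases a
    · simp [Matrix.mulVec, dotProduct, Fin.sum_univ_succAbove _ t, Mmat_inr, Fin.succAbove_ne]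
      linear_combination -h2
    · simp [Matrix.mulVec, dotProduct, Fin.sum_univ_succAbove _ t, Mmat_inr, Fin.succAbove_ne]
      linear_combination h1

/-- If the matrices `Z_{ij} = ((P_{ij}, Q_{ij}), (R_{ij}, S_{ij}))` are chosen as in the
preceding lemma (satisfying `Mᵢ = Z_{ij} Mⱼ` with the determinant normalizations
`det Z_{ij} = h_{ij}` and `det S_{ij} = (−1)^{tᵢ} s_{j,tᵢ} h_{ij}`), then for any indices
`i, j, k` there exist regular functions `β 0, …, β (r−2)` on `U i ∩ U j ∩ U k` such that
`Z_{ik} − Z_{ij} Z_{jk} = (0 | B_{ijk})`, where the `r×2` matrix `B_{ijk}` (with blocks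
`Q_{ik} − P_{ij}Q_{jk} − Q_{ij}S_{jk}` and `S_{ik} − R_{ij}Q_{jk} − S_{ij}S_{jk}`) equals
the product of the column vector
`(β 0, …, β̂ tᵢ, …, β (r−2), (β tᵢ)·fᵢ, (β tᵢ)·gᵢ)ᵀ` with the row vector `(g_k, −f_k)`. -/
theorem stmt18 {A : Type*} [CommRing A] {n : ℕ}
    (fi gi fj gj fk gk : A)
    (si sj sk : Fin (n + 1) → A) (ti tj tk : Fin (n + 1))
    (hij hjk hik : A)
    (hUnitij : IsUnit hij) (hUnitjk : IsUnit hjk) (hUnitik : IsUnit hik)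
    (hcocycle : hik = hij * hjk)
    (hnormi : si ti = (-1 : A) ^ (ti : ℕ)) (hnormj : sj tj = (-1 : A) ^ (tj : ℕ))
    (hnormk : sk tk = (-1 : A) ^ (tk : ℕ))
    -- (fk, gk) is a regular sequence cutting out Y (Koszul relations only):
    (hreg : ∀ a b : A, a * fk + b * gk = 0 → ∃ c : A, a = c * gk ∧ b = -(c * fk))
    (Pij : Matrix (Fin n) (Fin n) A) (Qij : Matrix (Fin n) (Fin 2) A)
    (Rij : Matrix (Fin 2) (Fin n) A) (Sij : Matrix (Fin 2) (Fin 2) A)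
    (Pjk : Matrix (Fin n) (Fin n) A) (Qjk : Matrix (Fin n) (Fin 2) A)
    (Rjk : Matrix (Fin 2) (Fin n) A) (Sjk : Matrix (Fin 2) (Fin 2) A)
    (Pik : Matrix (Fin n) (Fin n) A) (Qik : Matrix (Fin n) (Fin 2) A)
    (Rik : Matrix (Fin 2) (Fin n) A) (Sik : Matrix (Fin 2) (Fin 2) A)
    (hMij : Mmat ti si fi gi = Matrix.fromBlocks Pij Qij Rij Sij * Mmat tj sj fj gj)
    (hMjk : Mmat tj sj fj gj = Matrix.fromBlocks Pjk Qjk Rjk Sjk * Mmat tk sk fk gk)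
    (hMik : Mmat ti si fi gi = Matrix.fromBlocks Pik Qik Rik Sik * Mmat tk sk fk gk)
    (hdetZij : (Matrix.fromBlocks Pij Qij Rij Sij).det = hij)
    (hdetZjk : (Matrix.fromBlocks Pjk Qjk Rjk Sjk).det = hjk)
    (hdetZik : (Matrix.fromBlocks Pik Qik Rik Sik).det = hik)
    (hdetSij : Sij.det = (-1 : A) ^ (ti : ℕ) * sj ti * hij)
    (hdetSjk : Sjk.det = (-1 : A) ^ (tj : ℕ) * sk tj * hjk)
    (hdetSik : Sik.det = (-1 : A) ^ (ti : ℕ) * sk ti * hik) :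
    ∃ β : Fin (n + 1) → A,
      Matrix.fromBlocks Pik Qik Rik Sik -
        Matrix.fromBlocks Pij Qij Rij Sij * Matrix.fromBlocks Pjk Qjk Rjk Sjk =
      Matrix.fromBlocks 0
        (Matrix.vecMulVec (fun a : Fin n => β (ti.succAbove a)) ![gk, -fk])
        0
        (Matrix.vecMulVec ![β ti * fi, β ti * gi] ![gk, -fk]) := by
  set Z1 := Matrix.fromBlocks Pik Qik Rik Sik with hZ1
  set Z := Matrix.fromBlocks Pij Qij Rij Sij * Matrix.fromBlocks Pjk Qjk Rjk Sjk with hZ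
  have hMZ : Mmat ti si fi gi = Z * Mmat tk sk fk gk := by
    rw [hMij, hMjk, hZ, Matrix.mul_assoc]
  obtain ⟨c, hc⟩ := exists_col tk sk fk gk hreg (Z1 - Z) (by
    rw [Matrix.sub_mul, ← hMik, ← hMZ, sub_self])
  have hdet : Z.det = hik := by rw [hZ, Matrix.det_mul, hdetZij, hdetZjk, hcocycle]
  have hu : IsUnit Z.det := hdet ▸ hUnitik
  have hfac : Z1 = Z * (1 + Matrix.vecMulVec (Z⁻¹ *ᵥ c) (Sum.elim 0 ![gk, -fk])) := by
    rw [Matrix.mul_add, Matrix.mul_one, Matrix.mul_vecMulVec, Matrix.mulVec_mulVec,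
      Matrix.mul_nonsing_inv _ hu, Matrix.one_mulVec, ← hc]
    abel
  have hw : Sum.elim 0 ![gk, -fk] ⬝ᵥ (Z⁻¹ *ᵥ c) = 0 := by
    have h := congrArg Matrix.det hfac
    rw [Matrix.det_mul, hdetZik, hdet, Matrix.vecMulVec_eq Unit,
      Matrix.det_one_add_replicateCol_mul_replicateRow] at h
    have h2 := hUnitik.mul_left_cancel ((mul_one hik).trans h)
    linear_combination -h2
  obtain ⟨ξ, hξ⟩ := exists_preimage tk sk fk gk hreg _ hw
  have hcξ : c = Mmat ti si fi gi *ᵥ ξ := by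
    rw [hMZ, ← Matrix.mulVec_mulVec, ← hξ, Matrix.mulVec_mulVec,
      Matrix.mul_nonsing_inv _ hu, Matrix.one_mulVec]
  have hb : ∀ a : Fin 2, c (Sum.inr a) = ξ ti * ![fi, gi] a := by
    intro a
    rw [hcξ]
    simp [Matrix.mulVec, dotProduct, Mmat_inr, mul_comm]
  refine ⟨ti.insertNth (ξ ti) (fun a => c (Sum.inl a)), ?_⟩
  rw [hc]
  ext x y
  rcases x with x | x <;> rcases y with y | y
  · simp [Matrix.vecMulVec_apply]
  · fin_cases y <;> simp [Matrix.vecMulVec_apply]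
  · simp [Matrix.vecMulVec_apply]
  · fin_cases x <;> fin_cases y <;> simp [Matrix.vecMulVec_apply, hb]
end
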